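/- arXiv:2302.11417 — 2 statements merged into one kernel-verified Lean document; each statement's English description precedes it below -/
import Mathlib

section
/- Let H = (X, (s_i)_{i ∈ I}) be a hypergraph with correspondence τ and let f : X → {0,1,2} be a function with elements x, y ∈ f⁻¹(1), x ≠ y, and τ(x) = τ(y). Then f is extensible if and only if f + χ_{{x,y}} is extensible, where f + χ_{{x,y}} is the function agreeing with f except that it maps both x and y to 2. -/
/-- A Roman hitting set of the hypergraph given by the hyperedge family `s`:
a pair `(R1, R2)` such that every index `i` is in `R1` or `s i` meets `R2`. -/
def IsRHS {X I : Type*} (s : I → Set X) (R1 : Set I) (R2 : Set X) : Prop :=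
  ∀ i : I, i ∈ R1 ∨ (s i ∩ R2).Nonempty

/-- A minimal Roman hitting set: a rhs such that every rhs `(P1, P2) ≤ (R1, R2)`
equals `(R1, R2)`. -/
def IsMinimalRHS {X I : Type*} (s : I → Set X) (R1 : Set I) (R2 : Set X) : Prop :=
  IsRHS s R1 R2 ∧
    ∀ (P1 : Set I) (P2 : Set X), IsRHS s P1 P2 → P1 ⊆ R1 → P2 ⊆ R2 → P1 = R1 ∧ P2 = R2

/-- `D` is a hitting set of the subfamily `(s i)_{i ∈ J}`. -/
def IsHittingSet {X I : Type*} (s : I → Set X) (J : Set I) (D : Set X) : Prop :=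
  ∀ i ∈ J, (D ∩ s i).Nonempty

/-- `D` is a minimal hitting set of the subfamily `(s i)_{i ∈ J}`:
no proper subset of `D` is a hitting set of the subfamily. -/
def IsMinimalHittingSet {X I : Type*} (s : I → Set X) (J : Set I) (D : Set X) : Prop :=
  IsHittingSet s J D ∧ ∀ D' : Set X, D' ⊂ D → ¬ IsHittingSet s J D'

/-- A Roman hitting function for the hypergraph `s` with correspondence `τ`. -/
def IsRHF {X I : Type*} (s : I → Set X) (τ : X → I) (f : X → Fin 3) : Prop :=
  ∀ i : I, (∃ x ∈ s i, f x = 2) ∨ (∃ x : X, τ x = i ∧ f x = 1)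

/-- A minimal Roman hitting function: every rhf `g ≤ f` (pointwise) equals `f`. -/
def IsMinimalRHF {X I : Type*} (s : I → Set X) (τ : X → I) (f : X → Fin 3) : Prop :=
  IsRHF s τ f ∧ ∀ g : X → Fin 3, IsRHF s τ g → (∀ x, g x ≤ f x) → g = f

/-- `f` is extensible: some minimal rhf `g` satisfies `f ≤ g` pointwise. -/
def Extensible {X I : Type*} (s : I → Set X) (τ : X → I) (f : X → Fin 3) : Prop :=
  ∃ g : X → Fin 3, IsMinimalRHF s τ g ∧ ∀ x, f x ≤ g x

/-!
A vertex `x` of value `1` contributes nothing beyond hitting `τ x`. If a second vertex `y` with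
`τ y = τ x` has nonzero value, then `y` hits `τ x` as well, so `x` can be lowered to `0`. Hence in a
minimal Roman hitting function two vertices with the same index and nonzero values both have
value `2`, and raising them to `2` beforehand does not change the set of minimal extensions.
-/

section RomanHittingFunction

variable {X I : Type*} {s : I → Set X} {τ : X → I} {f g : X → Fin 3} {x y : X}

theorem IsRHF.update_zero [DecidableEq X] (hτ : ∀ z, z ∈ s (τ z)) (hf : IsRHF s τ f)
    (hx : f x ≠ 2) (hxy : x ≠ y) (hτxy : τ x = τ y) (hy : f y ≠ 0) :
    IsRHF s τ (Function.update f x 0) := by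
  intro i
  rcases hf i with ⟨z, hzi, hz⟩ | ⟨z, rfl, hz⟩
  · have hzx : z ≠ x := by rintro rfl; exact hx hz
    exact .inl ⟨z, hzi, by rwa [Function.update_of_ne hzx]⟩
  · obtain rfl | hzx := eq_or_ne z x
    · obtain hy_one | hy_two : f y = 1 ∨ f y = 2 := by lia
      · exact .inr ⟨y, hτxy.symm, by rwa [Function.update_of_ne hxy.symm]⟩
      · exact .inl ⟨y, hτxy ▸ hτ y, by rwa [Function.update_of_ne hxy.symm]⟩
    · exact .inr ⟨z, rfl, by rwa [Function.update_of_ne hzx]⟩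

theorem IsMinimalRHF.not_isRHF_update_zero [DecidableEq X] (hg : IsMinimalRHF s τ g)
    (hx : g x ≠ 0) : ¬ IsRHF s τ (Function.update g x 0) := fun hupdate ↦
  have hle : Function.update g x 0 ≤ g := update_le_self_iff.2 (Fin.zero_le _)
  hx (Function.update_eq_self_iff.1 (hg.2 _ hupdate hle)).symm

theorem IsMinimalRHF.eq_two_of_ne_zero (hτ : ∀ z, z ∈ s (τ z)) (hg : IsMinimalRHF s τ g)
    (hxy : x ≠ y) (hτxy : τ x = τ y) (hx : g x ≠ 0) (hy : g y ≠ 0) : g x = 2 := by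
  classical
  by_contra hx_two
  exact hg.not_isRHF_update_zero hx (hg.1.update_zero hτ hx_two hxy hτxy hy)

theorem Extensible.anti (hfg : f ≤ g) : Extensible s τ g → Extensible s τ f :=
  fun ⟨h, hh, hgh⟩ ↦ ⟨h, hh, hfg.trans hgh⟩

theorem extensible_update_two_iff [DecidableEq X] (hτ : ∀ z, z ∈ s (τ z)) (hxy : x ≠ y)
    (hτxy : τ x = τ y) (hx : f x ≠ 0) (hy : f y ≠ 0) :
    Extensible s τ (Function.update f x 2) ↔ Extensible s τ f := by
  refine ⟨.anti (le_update_self_iff.2 (Fin.le_last _)), fun ⟨g, hg, hfg⟩ ↦ ?_⟩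
  have hg_ne_zero {z : X} (hz : f z ≠ 0) : g z ≠ 0 :=
    ((Fin.pos_of_ne_zero hz).trans_le (hfg z)).ne'
  have hgx : g x = 2 := hg.eq_two_of_ne_zero hτ hxy hτxy (hg_ne_zero hx) (hg_ne_zero hy)
  exact ⟨g, hg, update_le_iff.2 ⟨hgx.ge, fun z _ ↦ hfg z⟩⟩

theorem extensible_update_two_ones_general [DecidableEq X] (hτ : ∀ z, z ∈ s (τ z))
    (hx : f x ≠ 0) (hy : f y ≠ 0) (hxy : x ≠ y) (hτxy : τ x = τ y) :
    Extensible s τ f ↔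
      Extensible s τ (Function.update (Function.update f x 2) y 2) := by
  have hx_updated : Function.update f x 2 x ≠ 0 := by simp
  have hy_updated : Function.update f x 2 y ≠ 0 := by rwa [Function.update_of_ne hxy.symm]
  rw [extensible_update_two_iff hτ hxy.symm hτxy.symm hy_updated hx_updated,
    extensible_update_two_iff hτ hxy hτxy hx hy]

end RomanHittingFunction

/-- If `f x = f y = 1` with `x ≠ y` and `τ x = τ y`, then `f` is
extensible iff the function obtained from `f` by raising the values at `x` and
`y` to `2` is extensible. -/
theorem extensible_update_two_ones {X I : Type*} [Fintype X] [Fintype I]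
    [DecidableEq X] (s : I → Set X) (τ : X → I) (hτ : ∀ x, x ∈ s (τ x))
    (f : X → Fin 3) (x y : X) (hx : f x = 1) (hy : f y = 1)
    (hne : x ≠ y) (hττ : τ x = τ y) :
    Extensible s τ f ↔
      Extensible s τ (Function.update (Function.update f x 2) y 2) :=
  extensible_update_two_ones_general hτ (by simp [hx]) (by simp [hy]) hne hττ
end

section
/- Let H = (X, (s_i)_{i ∈ I}) be a hypergraph with correspondence τ and let f : X → {0,1,2} be a function such that for all x, y ∈ f⁻¹(1), x ≠ y implies τ(x) ≠ τ(y). Then f is extensible if and only if there exist a set R_2 with f⁻¹(2) ⊆ R_2 ⊆ f⁻¹(1) ∪ f⁻¹(2) and a map ρ : R_2 → I satisfying: (1) ρ(x) ≠ τ(x) for every x ∈ R_2; (2) s_{ρ(x)} ∩ R_2 = {x} for every x ∈ R_2; (3) s_{τ(x)} ∩ R_2 = ∅ for every x ∈ f⁻¹(1) \ R_2; and (4) for every i ∈ I with τ⁻¹(i) = ∅: if s_i ⊆ (⋃_{x ∈ f⁻¹(1) \ R_2} s_{τ(x)}) ∪ (⋃_{x ∈ R_2} s_{ρ(x)}), then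 s_i ∩ R_2 ≠ ∅. -/
/-!
A minimal Roman hitting function `g` is governed by its set `V = g⁻¹(2)`: `τ` maps `g⁻¹(1)`
bijectively onto the edges missed by `V`, and each `x ∈ V` has a private edge other than `τ x`,
i.e. one meeting `V` only in `x`. If such a `g` extends `f`, then `R2 = {x ∈ V | f x ≠ 0}` and a
choice `ρ` of private edges satisfy (1)–(4).

Conversely, the new elements of value `2` must avoid the set `B` of all `s (τ x)`,
`x ∈ f⁻¹(1) \ R2`, and all `s (ρ x)`, `x ∈ R2`. By (4), the complement of `B` hits every edge
outside the range of `τ` that `R2` misses. As these edges are finite, Zorn's lemma gives a minimal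
hitting set `M ⊆ Bᶜ` of them. It brings its own private edges and keeps those of `R2`, so
`V = R2 ∪ M` can be taken as the set of elements of value `2`. All edges missed by `V` lie in the
range of `τ`, and a transversal of them containing `f⁻¹(1) \ R2` receives the value `1`.
-/

open Set

section MissedEdges

variable {X I : Type*} {s : I → Set X} {U V : Set X} {i : I}

/-- The indices of the hyperedges disjoint from `V`. If `V` is the set where a Roman hitting
function takes the value `2`, these are the hyperedges that have to be hit by a value `1`. -/
def missedEdges (s : I → Set X) (V : Set X) : Set I := {i | s i ∩ V = ∅}

theorem mem_missedEdges : i ∈ missedEdges s V ↔ s i ∩ V = ∅ := Iff.rfl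

theorem missedEdges_union : missedEdges s (U ∪ V) = missedEdges s U ∩ missedEdges s V := by
  ext i
  simp only [mem_inter_iff, mem_missedEdges, inter_union_distrib_left, union_empty_iff]

end MissedEdges

section HittingSet

variable {X I : Type*} {s : I → Set X} {J : Set I} {D : Set X}

theorem nonempty_sInter_inter_of_isChain {c : Set (Set X)} {t : Set X}
    (hc : IsChain (· ⊆ ·) c) (hne : c.Nonempty) (ht : t.Finite)
    (hmeet : ∀ A ∈ c, (A ∩ t).Nonempty) : (⋂₀ c ∩ t).Nonempty := by
  have hfin : ((· ∩ t) '' c).Finite :=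
    ht.finite_subsets.subset (image_subset_iff.2 fun _ _ ↦ inter_subset_right)
  obtain ⟨A, hA, hmin⟩ := hfin.exists_minimalFor' _ _ hne
  obtain ⟨x, hxA, hxt⟩ := hmeet A hA
  refine ⟨x, fun B hB ↦ ?_, hxt⟩
  rcases hc.total hA hB with hAB | hBA
  · exact hAB hxA
  · exact (hmin hB (inter_subset_inter_left t hBA) ⟨hxA, hxt⟩).1

theorem IsHittingSet.exists_isMinimalHittingSet_subset (hD : IsHittingSet s J D)
    (hfin : ∀ i ∈ J, (s i).Finite) : ∃ M ⊆ D, IsMinimalHittingSet s J M := by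
  obtain ⟨M, hMD, hM⟩ := zorn_superset_nonempty {A | IsHittingSet s J A}
    (fun c hcJ hc hne ↦ ⟨⋂₀ c,
      fun i hi ↦ nonempty_sInter_inter_of_isChain hc hne (hfin i hi) fun A hA ↦ hcJ hA i hi,
      fun _ ↦ sInter_subset_of_mem⟩) D hD
  exact ⟨M, hMD, hM.prop, fun A hAM hA ↦ hM.not_prop_of_lt hAM hA⟩

theorem IsMinimalHittingSet.exists_inter_eq_singleton (hD : IsMinimalHittingSet s J D) {x : X}
    (hx : x ∈ D) : ∃ i ∈ J, s i ∩ D = {x} := by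
  have hnot : ¬ IsHittingSet s J (D \ {x}) := hD.2 _ (sdiff_singleton_ssubset.2 hx)
  simp only [IsHittingSet, not_forall, not_nonempty_iff_eq_empty] at hnot
  obtain ⟨i, hi, hmiss⟩ := hnot
  have honly : s i ∩ D ⊆ {x} := fun y ⟨hys, hyD⟩ ↦ by
    by_contra hyx
    exact notMem_empty y (hmiss ▸ ⟨⟨hyD, hyx⟩, hys⟩)
  have hmeet : (s i ∩ D).Nonempty := inter_comm D (s i) ▸ hD.1 i hi
  exact ⟨i, hi, hmeet.subset_singleton_iff.1 honly⟩

end HittingSet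

section RomanHittingFunction

variable {X I : Type*} {s : I → Set X} {τ : X → I} {g : X → Fin 3} {x : X}

theorem isRHF_iff_surjOn :
    IsRHF s τ g ↔ SurjOn τ (g ⁻¹' {1}) (missedEdges s (g ⁻¹' {2})) := by
  refine forall_congr' fun i ↦ ?_
  rw [mem_missedEdges, ← not_nonempty_iff_eq_empty, ← or_iff_not_imp_left]
  exact or_congr Iff.rfl (exists_congr fun _ ↦ and_comm)

theorem IsRHF.update_zero_s11 [DecidableEq X] (hg : IsRHF s τ g) (hx : g x = 1)
    (hτx : (∃ y ∈ s (τ x), g y = 2) ∨ ∃ y ≠ x, τ y = τ x ∧ g y = 1) :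
    IsRHF s τ (Function.update g x 0) := by
  intro i
  have := hg i
  grind [Function.update_apply]

theorem IsRHF.update_one [DecidableEq X] (hg : IsRHF s τ g)
    (hedges : ∀ i ≠ τ x, x ∈ s i → ∃ y ∈ s i, y ≠ x ∧ g y = 2) :
    IsRHF s τ (Function.update g x 1) := by
  intro i
  have := hg i
  grind [Function.update_apply]

theorem IsMinimalRHF.not_isRHF_update [DecidableEq X] (hg : IsMinimalRHF s τ g) {v : Fin 3}
    (hv : v < g x) : ¬ IsRHF s τ (Function.update g x v) := by
  intro hupdate
  have heq := hg.2 _ hupdate (update_le_self_iff.2 hv.le)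
  exact hv.ne (Function.update_eq_self_iff.1 heq)

theorem IsMinimalRHF.bijOn (hg : IsMinimalRHF s τ g) :
    BijOn τ (g ⁻¹' {1}) (missedEdges s (g ⁻¹' {2})) := by
  classical
  have hzero : ∀ x ∈ g ⁻¹' {1}, ¬ IsRHF s τ (Function.update g x 0) := fun x (hx : g x = 1) ↦
    hg.not_isRHF_update (by rw [hx]; decide)
  refine ⟨fun x hx ↦ ?_, fun x hx y hy hxy ↦ ?_, isRHF_iff_surjOn.1 hg.1⟩
  · rw [mem_missedEdges, ← not_nonempty_iff_eq_empty]
    exact fun hmeet ↦ hzero x hx (hg.1.update_zero_s11 hx (.inl hmeet))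
  · by_contra hne
    exact hzero x hx (hg.1.update_zero_s11 hx (.inr ⟨y, Ne.symm hne, hxy.symm, hy⟩))

theorem IsMinimalRHF.exists_inter_eq_singleton (hg : IsMinimalRHF s τ g) (hx : g x = 2) :
    ∃ i ≠ τ x, s i ∩ g ⁻¹' {2} = {x} := by
  classical
  by_contra! hprivate
  refine hg.not_isRHF_update (x := x) (v := 1) (by rw [hx]; decide)
    (hg.1.update_one fun i hi hxi ↦ ?_)
  by_contra! honly
  refine hprivate i hi (Subset.antisymm (fun y ⟨hys, hy⟩ ↦ ?_) (singleton_subset_iff.2 ⟨hxi, hx⟩))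
  by_contra hyx
  exact honly y hys hyx hy

theorem IsMinimalRHF.exists_private_edge_map (hg : IsMinimalRHF s τ g) :
    ∃ ρ : X → I, ∀ x, g x = 2 → ρ x ≠ τ x ∧ s (ρ x) ∩ g ⁻¹' {2} = {x} := by
  have hprivate : ∀ x, ∃ i, g x = 2 → i ≠ τ x ∧ s i ∩ g ⁻¹' {2} = {x} := fun x ↦ by
    by_cases hx : g x = 2
    · exact (hg.exists_inter_eq_singleton hx).imp fun _ hi _ ↦ hi
    · exact ⟨τ x, fun h ↦ absurd h hx⟩
  exact Classical.skolem.1 hprivate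

theorem IsRHF.eq_two_of_le {h : X → Fin 3} (hh : IsRHF s τ h) (hτ : ∀ x, x ∈ s (τ x))
    (hle : ∀ x, h x ≤ g x) (hmaps : MapsTo τ (g ⁻¹' {1}) (missedEdges s (g ⁻¹' {2})))
    (hprivate : ∃ i ≠ τ x, s i ∩ g ⁻¹' {2} = {x}) : h x = 2 := by
  obtain ⟨i, hi, honly⟩ := hprivate
  have huniq : ∀ y ∈ s i, g y = 2 → y = x := fun y hys hy ↦ honly.subset ⟨hys, hy⟩
  rcases hh i with ⟨y, hys, hy⟩ | ⟨y, rfl, hy⟩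
  · have hgy : g y = 2 := by have := hle y; omega
    exact huniq y hys hgy ▸ hy
  · have hgy : g y = 1 ∨ g y = 2 := by have := hle y; omega
    rcases hgy with hgy | hgy
    · exact absurd ((mem_missedEdges.1 (hmaps hgy)).symm.trans honly) (singleton_ne_empty x).symm
    · exact absurd (congrArg τ (huniq y (hτ y) hgy)) hi

theorem isMinimalRHF_of_bijOn (hτ : ∀ x, x ∈ s (τ x))
    (hbij : BijOn τ (g ⁻¹' {1}) (missedEdges s (g ⁻¹' {2})))
    (hprivate : ∀ x ∈ g ⁻¹' {2}, ∃ i ≠ τ x, s i ∩ g ⁻¹' {2} = {x}) : IsMinimalRHF s τ g := by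
  refine ⟨isRHF_iff_surjOn.2 hbij.surjOn, fun h hh hle ↦ ?_⟩
  have htwo : ∀ x, g x = 2 → h x = 2 := fun x hx ↦
    hh.eq_two_of_le hτ hle hbij.mapsTo (hprivate x hx)
  have hone : ∀ x, g x = 1 → h x = 1 := by
    intro x hx
    have hmiss : ¬ ∃ y ∈ s (τ x), h y = 2 := by
      rintro ⟨y, hys, hy⟩
      have hgy : g y = 2 := by have := hle y; omega
      exact eq_empty_iff_forall_notMem.1 (hbij.mapsTo hx) y ⟨hys, hgy⟩
    obtain ⟨y, hyx, hy⟩ := (hh (τ x)).resolve_left hmiss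
    have hgy : g y = 1 := by have := hle y; have := htwo y; omega
    exact hbij.injOn hgy hx hyx ▸ hy
  funext x
  have := hle x
  have := hone x
  have := htwo x
  omega

theorem exists_preimage_one_eq_preimage_two_eq {A V : Set X} (hAV : Disjoint A V) :
    ∃ g : X → Fin 3, g ⁻¹' {1} = A ∧ g ⁻¹' {2} = V := by
  classical
  have hnot : ∀ ⦃x⦄, x ∈ A → x ∉ V := disjoint_left.1 hAV
  refine ⟨fun x ↦ if x ∈ V then 2 else if x ∈ A then 1 else 0, ?_, ?_⟩ <;> ext x <;>
    simp only [mem_preimage, mem_singleton_iff] <;> grind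

theorem exists_isMinimalRHF_of_private_edges (hτ : ∀ x, x ∈ s (τ x)) {A V : Set X}
    (hrange : missedEdges s V ⊆ range τ) (hinj : InjOn τ A) (hmaps : MapsTo τ A (missedEdges s V))
    (hprivate : ∀ x ∈ V, ∃ i ≠ τ x, s i ∩ V = {x}) :
    ∃ g, IsMinimalRHF s τ g ∧ A ⊆ g ⁻¹' {1} ∧ g ⁻¹' {2} = V := by
  obtain ⟨A', hAA', hbij⟩ := hinj.bijOn_image.exists_extend hmaps.image_subset hrange
  have hdisj : Disjoint A' V := disjoint_left.2 fun x hxA' hxV ↦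
    eq_empty_iff_forall_notMem.1 (hbij.mapsTo hxA') x ⟨hτ x, hxV⟩
  obtain ⟨g, rfl, rfl⟩ := exists_preimage_one_eq_preimage_two_eq hdisj
  exact ⟨g, isMinimalRHF_of_bijOn hτ hbij hprivate, hAA', rfl⟩

end RomanHittingFunction

section ExtensionWitness

variable {X I : Type*} {s : I → Set X} {τ : X → I} {f : X → Fin 3} {R2 M : Set X} {ρ : X → I}
  {x : X}

/-- The elements that must not receive the value `2` unless they belong to `R2`: a `2` there would
hit an edge `s (τ x)` reserved for the value `1` at `x`, or an edge `s (ρ x)` private to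
`x ∈ R2`. -/
def blockedSet (s : I → Set X) (τ : X → I) (f : X → Fin 3) (R2 : Set X) (ρ : X → I) : Set X :=
  (⋃ x ∈ f ⁻¹' {1} \ R2, s (τ x)) ∪ ⋃ x ∈ R2, s (ρ x)

/-- The combinatorial certificate that `f` is extensible: `R2` collects the elements in the support
of `f` that get the value `2`, and `ρ` assigns to each of them a private edge. The map `ρ` is total,
but only its values on `R2` matter. -/
structure IsExtensionWitness (s : I → Set X) (τ : X → I) (f : X → Fin 3) (R2 : Set X) (ρ : X → I) :
    Prop where
  two_subset : f ⁻¹' {2} ⊆ R2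
  subset_support : R2 ⊆ f ⁻¹' {1} ∪ f ⁻¹' {2}
  ne_tau : ∀ x ∈ R2, ρ x ≠ τ x
  inter_eq_singleton : ∀ x ∈ R2, s (ρ x) ∩ R2 = {x}
  inter_eq_empty : ∀ x ∈ f ⁻¹' {1} \ R2, s (τ x) ∩ R2 = ∅
  inter_nonempty : ∀ i, τ ⁻¹' {i} = ∅ → s i ⊆ blockedSet s τ f R2 ρ → (s i ∩ R2).Nonempty

theorem tau_mem_missedEdges_of_disjoint_blockedSet (hM : Disjoint M (blockedSet s τ f R2 ρ))
    (hx : x ∈ f ⁻¹' {1} \ R2) : τ x ∈ missedEdges s M :=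
  ((hM.mono_right (subset_union_of_subset_left (subset_biUnion_of_mem hx) _)).symm).inter_eq

theorem rho_mem_missedEdges_of_disjoint_blockedSet (hM : Disjoint M (blockedSet s τ f R2 ρ))
    (hx : x ∈ R2) : ρ x ∈ missedEdges s M :=
  ((hM.mono_right (subset_union_of_subset_right (subset_biUnion_of_mem hx) _)).symm).inter_eq

theorem IsExtensionWitness.isHittingSet_compl_blockedSet (h : IsExtensionWitness s τ f R2 ρ) :
    IsHittingSet s (missedEdges s R2 \ range τ) (blockedSet s τ f R2 ρ)ᶜ := by
  rintro i ⟨hmiss, hrange⟩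
  have hnot : ¬ s i ⊆ blockedSet s τ f R2 ρ := fun hsub ↦
    (h.inter_nonempty i (preimage_singleton_eq_empty.2 hrange) hsub).ne_empty hmiss
  rwa [inter_comm, inter_compl_nonempty_iff]

theorem IsExtensionWitness.exists_inter_union_eq_singleton (h : IsExtensionWitness s τ f R2 ρ)
    (hMB : Disjoint M (blockedSet s τ f R2 ρ))
    (hM : IsMinimalHittingSet s (missedEdges s R2 \ range τ) M) (hx : x ∈ R2 ∪ M) :
    ∃ i ≠ τ x, s i ∩ (R2 ∪ M) = {x} := by
  rcases hx with hx | hx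
  · refine ⟨ρ x, h.ne_tau x hx, ?_⟩
    rw [inter_union_distrib_left, h.inter_eq_singleton x hx,
      rho_mem_missedEdges_of_disjoint_blockedSet hMB hx, union_empty]
  · obtain ⟨i, ⟨hmiss, hrange⟩, honly⟩ := hM.exists_inter_eq_singleton hx
    refine ⟨i, fun hi ↦ hrange ⟨x, hi.symm⟩, ?_⟩
    rw [inter_union_distrib_left, honly, mem_missedEdges.1 hmiss, empty_union]

theorem IsExtensionWitness.extensible (h : IsExtensionWitness s τ f R2 ρ)
    (hτ : ∀ x, x ∈ s (τ x)) (hfin : ∀ i ∉ range τ, (s i).Finite) (hinj : InjOn τ (f ⁻¹' {1})) :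
    Extensible s τ f := by
  obtain ⟨M, hMB, hM⟩ := h.isHittingSet_compl_blockedSet.exists_isMinimalHittingSet_subset
    fun i hi ↦ hfin i hi.2
  rw [subset_compl_iff_disjoint_right] at hMB
  have hrange : missedEdges s (R2 ∪ M) ⊆ range τ := by
    rw [missedEdges_union]
    rintro i ⟨hR2, hMi⟩
    by_contra hi
    exact (hM.1 i ⟨hR2, hi⟩).ne_empty ((inter_comm _ _).trans hMi)
  have hmaps : MapsTo τ (f ⁻¹' {1} \ R2) (missedEdges s (R2 ∪ M)) := fun x hx ↦
    missedEdges_union ▸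
      ⟨h.inter_eq_empty x hx, tau_mem_missedEdges_of_disjoint_blockedSet hMB hx⟩
  obtain ⟨g, hg, hone, htwo⟩ := exists_isMinimalRHF_of_private_edges hτ hrange
    (hinj.mono sdiff_subset) hmaps fun x ↦ h.exists_inter_union_eq_singleton hMB hM
  have hR2 : ∀ x ∈ R2, g x = 2 := fun x hx ↦ htwo.superset (.inl hx)
  refine ⟨g, hg, fun x ↦ ?_⟩
  by_cases hx : x ∈ R2
  · exact hR2 x hx ▸ Fin.le_last (f x)
  · have hf2 : f x ≠ 2 := fun hf ↦ hx (h.two_subset hf)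
    have hf1 : f x = 1 → g x = 1 := fun hf ↦ hone ⟨hf, hx⟩
    omega

theorem IsMinimalRHF.exists_isExtensionWitness {g : X → Fin 3} (hg : IsMinimalRHF s τ g)
    (hle : ∀ x, f x ≤ g x) : ∃ R2 ρ, IsExtensionWitness s τ f R2 ρ := by
  obtain ⟨ρ, hρ⟩ := hg.exists_private_edge_map
  have hone : ∀ x ∈ f ⁻¹' {1} \ (g ⁻¹' {2} \ f ⁻¹' {0}), s (τ x) ∩ g ⁻¹' {2} = ∅ := by
    rintro x ⟨hfx : f x = 1, hx⟩
    have hgx : g x ≠ 2 := fun hgx ↦ hx ⟨hgx, by simp [hfx]⟩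
    exact hg.bijOn.mapsTo (by have := hle x; grind : g x = 1)
  refine ⟨g ⁻¹' {2} \ f ⁻¹' {0}, ρ, ?two_subset, ?subset_support, fun x hx ↦ (hρ x hx.1).1,
    ?inter_eq_singleton, ?inter_eq_empty, ?inter_nonempty⟩
  case two_subset =>
    rintro x (hx : f x = 2)
    exact ⟨by have := hle x; grind, by simp [hx]⟩
  case subset_support =>
    rintro x ⟨-, hx : f x ≠ 0⟩
    exact (by omega : f x = 1 ∨ f x = 2)
  case inter_eq_singleton =>
    intro x hx
    rw [← inter_sdiff_assoc, (hρ x hx.1).2]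
    exact (disjoint_singleton_left.2 hx.2).sdiff_eq_left
  case inter_eq_empty =>
    intro x hx
    rw [← inter_sdiff_assoc, hone x hx, empty_sdiff]
  case inter_nonempty =>
    intro i hi hsub
    have hnone : ¬ ∃ y, τ y = i ∧ g y = 1 := fun ⟨y, hy, _⟩ ↦ eq_empty_iff_forall_notMem.1 hi y hy
    obtain ⟨y, hyi, hy⟩ := (hg.1 i).resolve_right hnone
    rcases hsub hyi with hyB | hyB <;> obtain ⟨x, hx, hyx⟩ := mem_iUnion₂.1 hyB
    · exact absurd ⟨hyx, hy⟩ (eq_empty_iff_forall_notMem.1 (hone x hx) y)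
    · obtain rfl : y = x := (hρ x hx.1).2.subset ⟨hyx, hy⟩
      exact ⟨y, hyi, hx⟩

end ExtensionWitness

theorem extensible_iff_general {X I : Type*} {s : I → Set X} {τ : X → I} (hτ : ∀ x, x ∈ s (τ x))
    (hfin : ∀ i ∉ range τ, (s i).Finite) {f : X → Fin 3} (hinj : InjOn τ (f ⁻¹' {1})) :
    Extensible s τ f ↔
      ∃ (R2 : Set X) (ρ : X → I),
        f ⁻¹' {2} ⊆ R2 ∧ R2 ⊆ f ⁻¹' {1} ∪ f ⁻¹' {2} ∧
        (∀ x ∈ R2, ρ x ≠ τ x) ∧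
        (∀ x ∈ R2, s (ρ x) ∩ R2 = {x}) ∧
        (∀ x ∈ f ⁻¹' {1} \ R2, s (τ x) ∩ R2 = ∅) ∧
        (∀ i : I, τ ⁻¹' {i} = ∅ →
          s i ⊆ (⋃ x ∈ f ⁻¹' {1} \ R2, s (τ x)) ∪ (⋃ x ∈ R2, s (ρ x)) →
          (s i ∩ R2).Nonempty) := by
  constructor
  · rintro ⟨g, hg, hle⟩
    obtain ⟨R2, ρ, h⟩ := hg.exists_isExtensionWitness hle
    exact ⟨R2, ρ, h.two_subset, h.subset_support, h.ne_tau, h.inter_eq_singleton,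
      h.inter_eq_empty, h.inter_nonempty⟩
  · rintro ⟨R2, ρ, htwo, hsupport, hne, hsingleton, hempty, hnonempty⟩
    exact IsExtensionWitness.extensible ⟨htwo, hsupport, hne, hsingleton, hempty, hnonempty⟩
      hτ hfin hinj

/-- Characterization of extensibility, assuming `τ` is injective
on `f⁻¹(1)`. -/
theorem extensible_iff {X I : Type*} [Fintype X] [Fintype I]
    (s : I → Set X) (τ : X → I) (hτ : ∀ x, x ∈ s (τ x))
    (f : X → Fin 3)
    (hinj : ∀ x ∈ f ⁻¹' {1}, ∀ y ∈ f ⁻¹' {1}, x ≠ y → τ x ≠ τ y) :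
    Extensible s τ f ↔
      ∃ (R2 : Set X) (ρ : X → I),
        f ⁻¹' {2} ⊆ R2 ∧ R2 ⊆ f ⁻¹' {1} ∪ f ⁻¹' {2} ∧
        (∀ x ∈ R2, ρ x ≠ τ x) ∧
        (∀ x ∈ R2, s (ρ x) ∩ R2 = {x}) ∧
        (∀ x ∈ f ⁻¹' {1} \ R2, s (τ x) ∩ R2 = ∅) ∧
        (∀ i : I, τ ⁻¹' {i} = ∅ →
          s i ⊆ (⋃ x ∈ f ⁻¹' {1} \ R2, s (τ x)) ∪ (⋃ x ∈ R2, s (ρ x)) →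
          (s i ∩ R2).Nonempty) :=
  extensible_iff_general hτ (fun i _ ↦ (s i).toFinite)
    fun x hx y hy ↦ not_imp_not.1 (hinj x hx y hy)
end
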